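/- arXiv:1606.04850 — 3 statements merged into one kernel-verified Lean document; each statement's English description precedes it below -/
import Mathlib

section
/- The series ∑_{n=0}^∞ ζ(2n)/((n+1)·4^n) equals -log 2 + 7ζ(3)/(2π²). -/
open Real

/-!
Expanding `π z cot (π z)` by Mittag-Leffler and each pole by a geometric series gives
`∑ ζ(2n) z ^ (2n) = -(π z cot (π z)) / 2` for `0 < ‖z‖ < 1`. With `z = t / π`, multiplying by `t`
and integrating over `[0, π/2]` turns the series into `-(4 / π²) ∫ t² cot t`.

To evaluate this integral, write `t² cot t` through `t (π - 2t) cot t` and `t cot t`. The second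
reduces by parts to `∫ log (sin t)`. For the first, `π t (π - 2t) / 4` has the sine series
`∑ sin (2(2k+1)t) / (2k+1)³`, and `∫ sin (2nt) cot t = π/2` for every `n ≥ 1`, because
`sin (2nt) cot t` is a sum of cosines with constant term `1`. What remains is
`∑ 1 / (2k+1)³ = 7 ζ(3) / 8`.
-/

open MeasureTheory Set Interval

theorem hasSum_odd_of_hasSum_even {G : Type*} [AddCommGroup G] [TopologicalSpace G]
    [IsTopologicalAddGroup G] {f : ℕ → G} {a b : G} (hf : HasSum f a)
    (heven : HasSum (fun k ↦ f (2 * k)) b) : HasSum (fun k ↦ f (2 * k + 1)) (a - b) := by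
  have hinj : Function.Injective fun k : ℕ ↦ 2 * k := mul_right_injective₀ two_ne_zero
  have hcompl : (range fun k : ℕ ↦ 2 * k)ᶜ = range fun k ↦ 2 * k + 1 := by
    simpa using Nat.isCompl_even_odd.compl_eq
  have hodd := (hinj.hasSum_range_iff.2 heven).hasSum_compl_iff.2 (by rwa [add_sub_cancel])
  rw [hcompl] at hodd
  exact ((add_left_injective 1).comp hinj).hasSum_range_iff.1 hodd

theorem hasSum_intervalIntegral_of_norm_le_of_summable {ι E : Type*} [Countable ι]
    [NormedAddCommGroup E] [NormedSpace ℝ E] {a b : ℝ} {F : ι → ℝ → E} {f : ℝ → E} {C : ι → ℝ}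
    (hF_meas : ∀ i, AEStronglyMeasurable (F i) (volume.restrict (Ι a b)))
    (hF_le : ∀ i, ∀ t ∈ Ι a b, ‖F i t‖ ≤ C i) (hC : Summable C)
    (hf : ∀ t ∈ Ι a b, HasSum (fun i ↦ F i t) (f t)) :
    HasSum (fun i ↦ ∫ t in a..b, F i t) (∫ t in a..b, f t) :=
  intervalIntegral.hasSum_integral_of_dominated_convergence (fun i _ ↦ C i) hF_meas
    (fun i ↦ .of_forall (hF_le i)) (.of_forall fun _ _ ↦ hC) intervalIntegrable_const
    (.of_forall hf)

theorem hasSum_intervalIntegral_of_hasSum_mul_pow {ι : Type*} [Countable ι] {a : ι → ℂ} {e : ι → ℕ}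
    {f : ℝ → ℂ} {r : ℝ} (hr : 0 < r)
    (hf : ∀ t ∈ Ioc 0 r, HasSum (fun i ↦ a i * (t : ℂ) ^ e i) (f t)) :
    HasSum (fun i ↦ a i * (r ^ (e i + 1) / (e i + 1))) (∫ t in 0..r, f t) := by
  have hterm (i : ι) :
      ∫ t in 0..r, a i * (t : ℂ) ^ e i = a i * (r ^ (e i + 1) / (e i + 1)) := by
    simp only [← Complex.ofReal_pow]
    rw [intervalIntegral.integral_const_mul, intervalIntegral.integral_ofReal, integral_pow,
      zero_pow (e i).succ_ne_zero, sub_zero]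
    push_cast
    rfl
  have hle (i : ι) : ∀ t ∈ Ι 0 r, ‖a i * (t : ℂ) ^ e i‖ ≤ ‖a i * (r : ℂ) ^ e i‖ := by
    intro t ht
    rw [uIoc_of_le hr.le] at ht
    have ht₀ := ht.1.le
    simp only [norm_mul, norm_pow, Complex.norm_of_nonneg ht₀, Complex.norm_of_nonneg hr.le]
    gcongr
    exact ht.2
  simp only [← hterm]
  refine hasSum_intervalIntegral_of_norm_le_of_summable
    (fun i ↦ Continuous.aestronglyMeasurable (by fun_prop)) hle
    (hf r ⟨hr, le_rfl⟩).summable.norm ?_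
  rwa [uIoc_of_le hr.le]

/-! ### The even zeta values and the cotangent -/

theorem hasSum_one_div_nat_pow_riemannZeta {m : ℕ} (hm : 1 < m) :
    HasSum (fun n : ℕ ↦ 1 / (n : ℂ) ^ m) (riemannZeta m) := by
  rw [zeta_nat_eq_tsum_of_gt_one hm]
  refine Summable.hasSum (Summable.of_norm ?_)
  simpa using Real.summable_nat_pow_inv.2 hm

theorem hasSum_one_div_nat_add_one_pow_riemannZeta {m : ℕ} (hm : 1 < m) :
    HasSum (fun n : ℕ ↦ 1 / ((n : ℂ) + 1) ^ m) (riemannZeta m) := by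
  simpa [(zero_lt_one.trans hm).ne'] using
    (hasSum_nat_add_iff' 1).2 (hasSum_one_div_nat_pow_riemannZeta hm)

theorem hasSum_one_div_odd_pow_riemannZeta {m : ℕ} (hm : 1 < m) :
    HasSum (fun k : ℕ ↦ 1 / ((2 * k + 1 : ℕ) : ℂ) ^ m) ((1 - 1 / 2 ^ m) * riemannZeta m) := by
  have hζ := hasSum_one_div_nat_pow_riemannZeta hm
  have heven : HasSum (fun k : ℕ ↦ 1 / ((2 * k : ℕ) : ℂ) ^ m) (1 / 2 ^ m * riemannZeta m) := by
    convert! hζ.mul_left (1 / 2 ^ m) using 2 with k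
    push_cast
    rw [mul_pow, one_div_mul_one_div]
  rw [one_sub_mul]
  exact hasSum_odd_of_hasSum_even hζ heven

theorem summable_sq_div_sq_pow {z : ℂ} (hz : ‖z‖ < 1) :
    Summable fun p : ℕ × ℕ ↦ (z ^ 2 / ((p.2 : ℂ) + 1) ^ 2) ^ (p.1 + 1) := by
  have hgeom : Summable fun n : ℕ ↦ (‖z‖ ^ 2) ^ (n + 1) :=
    (summable_nat_add_iff 1).2 <|
      summable_geometric_of_lt_one (by positivity) (pow_lt_one₀ (norm_nonneg z) hz two_ne_zero)
  have hsq : Summable fun k : ℕ ↦ 1 / ((k : ℝ) + 1) ^ 2 := by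
    simpa using (summable_nat_add_iff 1).2 (Real.summable_one_div_nat_pow.2 one_lt_two)
  refine .of_norm_bounded
    (hgeom.mul_of_nonneg hsq (fun n ↦ by positivity) (fun k ↦ by positivity)) fun ⟨n, k⟩ ↦ ?_
  have hk : 1 / ((k : ℝ) + 1) ^ 2 ≤ 1 :=
    div_le_one_of_le₀ (one_le_pow₀ (by linarith [k.cast_nonneg (α := ℝ)])) (by positivity)
  calc ‖(z ^ 2 / ((k : ℂ) + 1) ^ 2) ^ (n + 1)‖
      = (‖z‖ ^ 2) ^ (n + 1) * (1 / ((k : ℝ) + 1) ^ 2) ^ (n + 1) := by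
        rw [norm_pow, norm_div, norm_pow, norm_pow, ← Nat.cast_succ, Complex.norm_natCast,
          Nat.cast_succ, ← mul_pow, mul_one_div]
    _ ≤ (‖z‖ ^ 2) ^ (n + 1) * (1 / ((k : ℝ) + 1) ^ 2) := by
        gcongr
        exact pow_le_of_le_one (by positivity) hk n.succ_ne_zero

theorem hasSum_sq_div_sq_pow {z : ℂ} (hz : ‖z‖ < 1) (k : ℕ) :
    HasSum (fun n : ℕ ↦ (z ^ 2 / ((k : ℂ) + 1) ^ 2) ^ (n + 1))
      (z ^ 2 / (((k : ℂ) + 1) ^ 2 - z ^ 2)) := by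
  have hk : (k : ℂ) + 1 ≠ 0 := k.cast_add_one_ne_zero
  have hlt : ‖z ^ 2 / ((k : ℂ) + 1) ^ 2‖ < 1 := by
    rw [← div_pow, norm_pow, norm_div, ← Nat.cast_succ, Complex.norm_natCast]
    refine pow_lt_one₀ (by positivity) ((div_lt_one (by positivity)).2 (hz.trans_le ?_)) two_ne_zero
    exact_mod_cast k.succ_pos
  convert! (hasSum_geometric_of_norm_lt_one hlt).mul_left (z ^ 2 / ((k : ℂ) + 1) ^ 2) using 1
  · exact funext fun n ↦ pow_succ' _ n
  · rw [← div_eq_mul_inv, div_div, mul_sub, mul_one, mul_div_cancel₀ _ (pow_ne_zero 2 hk)]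

theorem hasSum_riemannZeta_two_mul_add_one_mul_pow {z : ℂ} (hz : ‖z‖ < 1) :
    HasSum (fun n : ℕ ↦ riemannZeta (2 * (n + 1 : ℕ)) * z ^ (2 * (n + 1)))
      (∑' k : ℕ, z ^ 2 / (((k : ℂ) + 1) ^ 2 - z ^ 2)) := by
  have hdouble := summable_sq_div_sq_pow hz
  have hcol (n : ℕ) : HasSum (fun k : ℕ ↦ (z ^ 2 / ((k : ℂ) + 1) ^ 2) ^ (n + 1))
      (riemannZeta (2 * (n + 1 : ℕ)) * z ^ (2 * (n + 1))) := by
    have hζ := hasSum_one_div_nat_add_one_pow_riemannZeta (m := 2 * (n + 1)) (by lia)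
    convert! hζ.mul_right (z ^ (2 * (n + 1))) using 2 with k
    · rw [div_pow, ← pow_mul, ← pow_mul, one_div_mul_eq_div]
    · norm_cast
  have hrow := ((Equiv.prodComm ℕ ℕ).hasSum_iff.2 hdouble.hasSum).prod_fiberwise
    (hasSum_sq_div_sq_pow hz)
  rw [hrow.tsum_eq]
  exact hdouble.hasSum.prod_fiberwise hcol

theorem mem_integerComplement_of_norm_lt_one {z : ℂ} (hz₀ : z ≠ 0) (hz : ‖z‖ < 1) :
    z ∈ Complex.integerComplement := by
  rw [Complex.mem_integerComplement_iff]
  rintro ⟨n, rfl⟩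
  rw [Complex.norm_intCast] at hz
  exact hz₀ (by exact_mod_cast Int.abs_lt_one_iff.1 (by exact_mod_cast hz))

theorem tsum_sq_div_sq_sub_sq {z : ℂ} (hz : z ∈ Complex.integerComplement) :
    ∑' k : ℕ, z ^ 2 / (((k : ℂ) + 1) ^ 2 - z ^ 2) = 1 / 2 - π * z * Complex.cot (π * z) / 2 := by
  have hterm (k : ℕ) : z ^ 2 / (((k : ℂ) + 1) ^ 2 - z ^ 2) = -(z / 2) * cotTerm z k := by
    rw [cotTerm_identity hz, ← neg_sub, div_neg, sq_sub_sq]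
    ring
  rw [tsum_congr hterm, tsum_mul_left, ← cot_series_rep' hz]
  field_simp [Complex.integerComplement.ne_zero hz]
  ring

theorem hasSum_riemannZeta_two_mul_mul_pow {z : ℂ} (hz₀ : z ≠ 0) (hz : ‖z‖ < 1) :
    HasSum (fun n : ℕ ↦ riemannZeta (2 * n) * z ^ (2 * n))
      (-(π * z * Complex.cot (π * z)) / 2) := by
  have hpos := hasSum_riemannZeta_two_mul_add_one_mul_pow hz
  rw [tsum_sq_div_sq_sub_sq (mem_integerComplement_of_norm_lt_one hz₀ hz)] at hpos
  have hsum := (hasSum_nat_add_iff (f := fun n : ℕ ↦ riemannZeta (2 * n) * z ^ (2 * n)) 1).1 hpos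
  convert! hsum using 1
  simp only [Finset.sum_range_one, Nat.cast_zero, mul_zero, pow_zero, mul_one, riemannZeta_zero]
  ring

theorem hasSum_riemannZeta_two_mul_mul_div_pi_pow {t : ℝ} (ht₀ : 0 < t) (ht : t < π) :
    HasSum (fun n : ℕ ↦ riemannZeta (2 * n) * (t / π : ℂ) ^ (2 * n)) (-(t * cot t : ℝ) / 2) := by
  have hnorm : ‖(t / π : ℂ)‖ < 1 := by
    rw [← Complex.ofReal_div, Complex.norm_of_nonneg (by positivity)]
    exact (div_lt_one pi_pos).2 ht
  have hπ : (π : ℂ) ≠ 0 := mod_cast pi_ne_zero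
  have hsum := hasSum_riemannZeta_two_mul_mul_pow
    (div_ne_zero (Complex.ofReal_ne_zero.2 ht₀.ne') hπ) hnorm
  rw [mul_div_cancel₀ _ hπ] at hsum
  exact_mod_cast hsum

theorem hasSum_riemannZeta_two_mul_mul_div_pi_pow_div (m : ℕ) {r : ℝ} (hr₀ : 0 < r) (hr : r < π) :
    HasSum (fun n : ℕ ↦ riemannZeta (2 * n) * (r / π : ℂ) ^ (2 * n) / (2 * n + m + 1))
      (-(∫ t in 0..r, t ^ (m + 1) * cot t : ℝ) / (2 * r ^ (m + 1))) := by
  have hr' : (r : ℂ) ≠ 0 := Complex.ofReal_ne_zero.2 hr₀.ne'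
  have hpow : ∀ t ∈ Ioc 0 r,
      HasSum (fun n : ℕ ↦ riemannZeta (2 * n) / π ^ (2 * n) * (t : ℂ) ^ (2 * n + m))
        ((-(t ^ (m + 1) * cot t) / 2 : ℝ) : ℂ) := by
    intro t ht
    convert! (hasSum_riemannZeta_two_mul_mul_div_pi_pow ht.1 (ht.2.trans_lt hr)).mul_left
      ((t : ℂ) ^ m) using 1
    · ext n
      ring
    · push_cast
      ring
  have hint := hasSum_intervalIntegral_of_hasSum_mul_pow hr₀ hpow
  rw [intervalIntegral.integral_ofReal, intervalIntegral.integral_div,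
    intervalIntegral.integral_neg] at hint
  convert! hint.mul_left ((r : ℂ) ^ (m + 1))⁻¹ using 1
  · ext n
    push_cast
    rw [div_pow]
    field_simp
    ring
  · push_cast
    ring

/-! ### Integrals against the cotangent -/

theorem sinc_pos_of_mem_Ico {t : ℝ} (ht : t ∈ Ico 0 π) : 0 < sinc t := by
  rcases ht.1.eq_or_lt with rfl | h0
  · simp
  · rw [sinc_of_ne_zero h0.ne']
    exact div_pos (sin_pos_of_pos_of_lt_pi h0 ht.2) h0

theorem intervalIntegrable_mul_cot {b : ℝ} (hb : 0 ≤ b) (hbπ : b < π) :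
    IntervalIntegrable (fun t ↦ t * cot t) volume 0 b := by
  have hcont : ContinuousOn (fun t ↦ cos t / sinc t) (uIcc 0 b) := by
    rw [uIcc_of_le hb]
    refine continuous_cos.continuousOn.div continuous_sinc.continuousOn fun t ht ↦ ?_
    exact (sinc_pos_of_mem_Ico ⟨ht.1, ht.2.trans_lt hbπ⟩).ne'
  refine hcont.intervalIntegrable.congr fun t ht ↦ ?_
  rw [uIoc_of_le hb] at ht
  simp only [sinc_of_ne_zero ht.1.ne', div_div_eq_mul_div, cot_eq_cos_div_sin]
  ring

theorem intervalIntegrable_pow_succ_mul_cot (m : ℕ) {b : ℝ} (hb : 0 ≤ b) (hbπ : b < π) :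
    IntervalIntegrable (fun t ↦ t ^ (m + 1) * cot t) volume 0 b := by
  simpa only [pow_succ, mul_assoc] using
    (intervalIntegrable_mul_cot hb hbπ).continuousOn_mul (continuous_pow m).continuousOn

theorem continuousOn_mul_log_sin {b : ℝ} (hbπ : b < π) :
    ContinuousOn (fun t ↦ t * log (sin t)) (Icc 0 b) := by
  have hcont : ContinuousOn (fun t ↦ sin t * log (sin t) / sinc t) (Icc 0 b) :=
    (continuous_mul_log.comp continuous_sin).continuousOn.div continuous_sinc.continuousOn
      fun t ht ↦ (sinc_pos_of_mem_Ico ⟨ht.1, ht.2.trans_lt hbπ⟩).ne'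
  refine hcont.congr fun t ht ↦ ?_
  rcases ht.1.eq_or_lt with rfl | h0
  · simp
  · have hsin := sin_pos_of_pos_of_lt_pi h0 (ht.2.trans_lt hbπ)
    simp only [sinc_of_ne_zero h0.ne']
    field_simp

theorem integral_mul_cot {b : ℝ} (hb : 0 ≤ b) (hbπ : b < π) :
    ∫ t in 0..b, t * cot t = b * log (sin b) - ∫ t in 0..b, log (sin t) := by
  have hlog : IntervalIntegrable (fun t ↦ log (sin t)) volume 0 b := intervalIntegrable_log_sin
  have hcot := intervalIntegrable_mul_cot hb hbπ
  have hderiv (t : ℝ) (ht : t ∈ Ioo 0 b) :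
      HasDerivAt (fun t ↦ t * log (sin t)) (log (sin t) + t * cot t) t := by
    have hsin := sin_pos_of_pos_of_lt_pi ht.1 (ht.2.trans hbπ)
    simpa [cot_eq_cos_div_sin, Pi.mul_def] using!
      (hasDerivAt_id t).mul ((hasDerivAt_sin t).log hsin.ne')
  have hftc := intervalIntegral.integral_eq_sub_of_hasDerivAt_of_le hb
    (continuousOn_mul_log_sin hbπ) hderiv (hlog.add hcot)
  rw [intervalIntegral.integral_add hlog hcot, zero_mul, sub_zero] at hftc
  exact eq_sub_of_add_eq' hftc

theorem sin_two_mul_nat_mul_mul_cot (n : ℕ) {t : ℝ} (ht : sin t ≠ 0) :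
    sin (2 * n * t) * cot t
      = ∑ j ∈ Finset.range n, (cos (2 * j * t) + cos (2 * (j + 1 : ℕ) * t)) := by
  induction n with
  | zero => simp
  | succ n ih =>
    have hsub :
        sin (2 * (n + 1 : ℕ) * t) - sin (2 * n * t) = 2 * sin t * cos ((2 * n + 1) * t) := by
      rw [sin_sub_sin]
      push_cast
      ring_nf
    have hadd :
        cos (2 * n * t) + cos (2 * (n + 1 : ℕ) * t) = 2 * cos ((2 * n + 1) * t) * cos t := by
      rw [add_comm, cos_add_cos]
      push_cast
      ring_nf
    rw [Finset.sum_range_succ, ← ih, hadd, cot_eq_cos_div_sin]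
    have hcancel : sin t * (cos t / sin t) = cos t := mul_div_cancel₀ _ ht
    linear_combination cos t / sin t * hsub + 2 * cos ((2 * n + 1) * t) * hcancel

theorem abs_sin_two_mul_nat_mul_mul_cot_le (n : ℕ) (t : ℝ) :
    |sin (2 * n * t) * cot t| ≤ 2 * n := by
  rcases eq_or_ne (sin t) 0 with ht | ht
  · simp [cot_eq_cos_div_sin, ht]
  rw [sin_two_mul_nat_mul_mul_cot n ht]
  calc |∑ j ∈ Finset.range n, (cos (2 * j * t) + cos (2 * (j + 1 : ℕ) * t))|
      ≤ ∑ j ∈ Finset.range n, |cos (2 * j * t) + cos (2 * (j + 1 : ℕ) * t)| :=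
        Finset.abs_sum_le_sum_abs ..
    _ ≤ ∑ j ∈ Finset.range n, 2 := by
        gcongr with j
        exact (abs_add_le _ _).trans <|
          (add_le_add (abs_cos_le_one _) (abs_cos_le_one _)).trans_eq one_add_one_eq_two
    _ = 2 * n := by simp [mul_comm]

theorem integral_cos_two_mul_nat_mul {n : ℕ} (hn : n ≠ 0) :
    ∫ t in 0..(π / 2), cos (2 * n * t) = 0 := by
  have hn' : (2 * n : ℝ) ≠ 0 := by positivity
  rw [intervalIntegral.integral_comp_mul_left _ hn', integral_cos,
    show 2 * n * (π / 2) = n * π by ring, sin_nat_mul_pi]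
  simp

theorem integral_sin_two_mul_nat_mul_mul_cot {n : ℕ} (hn : n ≠ 0) :
    ∫ t in 0..(π / 2), sin (2 * n * t) * cot t = π / 2 := by
  have hcos (c : ℝ) : IntervalIntegrable (fun t ↦ cos (c * t)) volume 0 (π / 2) :=
    Continuous.intervalIntegrable (by fun_prop) _ _
  have hcongr : ∫ t in 0..(π / 2), sin (2 * n * t) * cot t
      = ∫ t in 0..(π / 2), ∑ j ∈ Finset.range n, (cos (2 * j * t) + cos (2 * (j + 1 : ℕ) * t)) := by
    refine intervalIntegral.integral_congr_Ioo_of_le (by positivity) fun t ht ↦ ?_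
    have hsin := sin_pos_of_pos_of_lt_pi ht.1 (ht.2.trans (half_lt_self pi_pos))
    exact sin_two_mul_nat_mul_mul_cot n hsin.ne'
  have hterm (j : ℕ) : ∫ t in 0..(π / 2), (cos (2 * j * t) + cos (2 * (j + 1 : ℕ) * t))
      = if j = 0 then π / 2 else 0 := by
    rw [intervalIntegral.integral_add (hcos _) (hcos _),
      integral_cos_two_mul_nat_mul j.succ_ne_zero, add_zero]
    split_ifs with hj
    · simp [hj]
    · exact integral_cos_two_mul_nat_mul hj
  rw [hcongr, intervalIntegral.integral_finsetSum fun j _ ↦ (hcos _).add (hcos _),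
    Finset.sum_congr rfl fun j _ ↦ hterm j]
  simp [hn]

theorem hasSum_integral_mul_cot_of_hasSum_sin {ι : Type*} [Countable ι] {b : ι → ℝ} {ν : ι → ℕ}
    {f : ℝ → ℝ} (hν : ∀ i, ν i ≠ 0) (hb : Summable fun i ↦ |b i| * ν i)
    (hf : ∀ t ∈ Ioc 0 (π / 2), HasSum (fun i ↦ b i * sin (2 * ν i * t)) (f t)) :
    HasSum (fun i ↦ b i * (π / 2)) (∫ t in 0..(π / 2), f t * cot t) := by
  have hmeas (i : ι) : Measurable fun t ↦ b i * (sin (2 * ν i * t) * cot t) := by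
    simp only [cot_eq_cos_div_sin]
    fun_prop
  have hle (i : ι) (t : ℝ) : ‖b i * (sin (2 * ν i * t) * cot t)‖ ≤ 2 * (|b i| * ν i) := by
    rw [norm_mul, norm_eq_abs, norm_eq_abs, mul_left_comm]
    gcongr
    exact abs_sin_two_mul_nat_mul_mul_cot_le _ t
  have hsum : ∀ t ∈ Ι 0 (π / 2),
      HasSum (fun i ↦ b i * (sin (2 * ν i * t) * cot t)) (f t * cot t) := by
    intro t ht
    rw [uIoc_of_le (by positivity)] at ht
    simpa only [mul_assoc] using (hf t ht).mul_right (cot t)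
  have hint := hasSum_intervalIntegral_of_norm_le_of_summable
    (fun i ↦ (hmeas i).aestronglyMeasurable) (fun i t _ ↦ hle i t) (hb.mul_left 2) hsum
  simpa only [intervalIntegral.integral_const_mul,
    integral_sin_two_mul_nat_mul_mul_cot (hν _)] using hint

theorem hasSum_sin_nat_mul_div_cube {x : ℝ} (hx : x ∈ Icc 0 (2 * π)) :
    HasSum (fun n : ℕ ↦ 1 / (n : ℝ) ^ 3 * sin (n * x)) (x * (π - x) * (2 * π - x) / 12) := by
  have hmem : x / (2 * π) ∈ Icc (0 : ℝ) 1 :=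
    ⟨div_nonneg hx.1 two_pi_pos.le, div_le_one_of_le₀ hx.2 two_pi_pos.le⟩
  convert! hasSum_one_div_nat_pow_mul_sin one_ne_zero hmem using 1
  · ext n
    rw [mul_one, show 2 * π * n * (x / (2 * π)) = n * x by field_simp]
  · simp [Polynomial.bernoulli_def, Finset.sum_range_succ, bernoulli, Nat.factorial, Nat.choose]
    field_simp
    ring

theorem hasSum_sin_odd_mul_div_cube {x : ℝ} (hx : x ∈ Icc 0 π) :
    HasSum (fun k : ℕ ↦ 1 / ((2 * k + 1 : ℕ) : ℝ) ^ 3 * sin ((2 * k + 1 : ℕ) * x))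
      (π * x * (π - x) / 8) := by
  have hall := hasSum_sin_nat_mul_div_cube (x := x) ⟨hx.1, by linarith [hx.2, pi_pos]⟩
  have hdouble := hasSum_sin_nat_mul_div_cube (x := 2 * x)
    ⟨by linarith [hx.1], by linarith [hx.2]⟩
  have heven : HasSum (fun k : ℕ ↦ 1 / ((2 * k : ℕ) : ℝ) ^ 3 * sin ((2 * k : ℕ) * x))
      (1 / 8 * (2 * x * (π - 2 * x) * (2 * π - 2 * x) / 12)) := by
    convert! hdouble.mul_left (1 / 8) using 2 with k
    push_cast
    rw [show (k : ℝ) * (2 * x) = 2 * k * x by ring]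
    ring
  convert! hasSum_odd_of_hasSum_even hall heven using 1
  ring

theorem hasSum_integral_mul_sub_mul_cot :
    HasSum (fun k : ℕ ↦ 1 / ((2 * k + 1 : ℕ) : ℝ) ^ 3 * (π / 2))
      (∫ t in 0..(π / 2), π * t * (π - 2 * t) / 4 * cot t) := by
  have hsq : Summable fun k : ℕ ↦ 1 / ((2 * k + 1 : ℕ) : ℝ) ^ 2 :=
    (Real.summable_one_div_nat_pow.2 one_lt_two).comp_injective
      ((add_left_injective 1).comp (mul_right_injective₀ two_ne_zero))
  refine hasSum_integral_mul_cot_of_hasSum_sin (fun k ↦ (2 * k).succ_ne_zero)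
    (hsq.congr fun k ↦ ?_) fun t ht ↦ ?_
  · rw [abs_of_nonneg (by positivity)]
    field_simp
  · convert! hasSum_sin_odd_mul_div_cube (x := 2 * t) ⟨by linarith [ht.1], by linarith [ht.2]⟩
      using 1
    · ext k
      rw [mul_left_comm, mul_assoc]
    · ring

theorem integral_mul_cot_zero_pi_div_two : ∫ t in 0..(π / 2), t * cot t = π / 2 * log 2 := by
  rw [integral_mul_cot (by positivity) (half_lt_self pi_pos), sin_pi_div_two, log_one,
    integral_log_sin_zero_pi_div_two]
  ring

theorem integral_sq_mul_cot_zero_pi_div_two :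
    ((∫ t in 0..(π / 2), t ^ 2 * cot t : ℝ) : ℂ)
      = π ^ 2 / 4 * (log 2 : ℝ) - 7 / 8 * riemannZeta 3 := by
  have hπ : (π : ℂ) ≠ 0 := mod_cast pi_ne_zero
  have hb₀ : 0 ≤ π / 2 := by positivity
  have hbπ : π / 2 < π := half_lt_self pi_pos
  have hsplit : ∫ t in 0..(π / 2), π * t * (π - 2 * t) / 4 * cot t
      = π ^ 2 / 4 * (π / 2 * log 2) - π / 2 * ∫ t in 0..(π / 2), t ^ 2 * cot t := by
    rw [← integral_mul_cot_zero_pi_div_two, ← intervalIntegral.integral_const_mul,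
      ← intervalIntegral.integral_const_mul, ← intervalIntegral.integral_sub
        ((intervalIntegrable_mul_cot hb₀ hbπ).const_mul _)
        ((intervalIntegrable_pow_succ_mul_cot 1 hb₀ hbπ).const_mul _)]
    congr 1
    ext t
    ring
  have hodd : HasSum (fun k : ℕ ↦ ((1 / ((2 * k + 1 : ℕ) : ℝ) ^ 3 * (π / 2) : ℝ) : ℂ))
      ((1 - 1 / 2 ^ 3) * riemannZeta 3 * (π / 2)) := by
    simpa using (hasSum_one_div_odd_pow_riemannZeta (m := 3) (by norm_num)).mul_right (π / 2 : ℂ)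
  have heq := (Complex.hasSum_ofReal.2 hasSum_integral_mul_sub_mul_cot).unique hodd
  rw [hsplit] at heq
  push_cast at heq ⊢
  refine mul_left_cancel₀ (div_ne_zero hπ two_ne_zero) ?_
  linear_combination -heq

theorem stmt2 :
    ∑' n : ℕ, riemannZeta (2 * n) / ((n + 1) * 4 ^ n) =
      -(Real.log 2 : ℂ) + 7 * riemannZeta 3 / (2 * (π : ℂ) ^ 2) := by
  have hπ : (π : ℂ) ≠ 0 := mod_cast pi_ne_zero
  have hsum := (hasSum_riemannZeta_two_mul_mul_div_pi_pow_div 1 (r := π / 2) (by positivity)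
    (half_lt_self pi_pos)).mul_left 2
  rw [integral_sq_mul_cot_zero_pi_div_two] at hsum
  convert hsum.tsum_eq using 1
  · refine tsum_congr fun n ↦ ?_
    have hn : (n : ℂ) + 1 ≠ 0 := n.cast_add_one_ne_zero
    have hhalf : ((π / 2 : ℝ) / π : ℂ) ^ (2 * n) = 1 / 4 ^ n := by
      push_cast
      rw [div_right_comm, div_self hπ, pow_mul, div_pow, one_pow, one_div_pow]
      norm_num
    rw [hhalf]
    push_cast
    rw [show (2 * n + 1 + 1 : ℂ) = 2 * (n + 1) by ring]
    field_simp
  · push_cast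
    field_simp
    ring
end

section
/- The series ∑_{n=0}^∞ ζ(2n)/((n+1)·16^n) equals -(1/2)·log 2 + 35ζ(3)/(4π²) - 4G/π, where G is Catalan's constant. -/
open Real

noncomputable def catalanConst : ℝ := ∑' n : ℕ, (-1) ^ n / (2 * (n : ℝ) + 1) ^ 2

/-! Summing geometric series in the partial fraction expansion of the cotangent gives
`∑ ζ(2n) x ^ (2n) = -(π x / 2) cot (π x)`, so with `F(u) = ∑ ζ(2n) u ^ (n + 1) / (n + 1)` the
function `F(x ^ 2)` is a primitive of `-π x ^ 2 cot (π x)`. On the upper half-plane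
`cot (π x) = -i (1 + q) / (1 - q)` with `q = e ^ (2πix)`, and integrating by parts produces a second
primitive, built from `log (1 - q)`, `Li₂(q)` and `Li₃(q)`. The two differ by a constant on the open
upper half of the unit disc, hence also on its diameter, up to which both are continuous; setting
`x = 0`, the constant is `ζ(3) / (2π²)`. At `x = 1/4` one has `q = i`, where `Im Li₂(i) = G` and
`Re Li₃(i) = -3 ζ(3) / 32`, and the required sum is `16 F(1/16)`. -/

open Complex (I)
open Filter Topology

section PowerSeries

variable {𝕜 : Type*} [RCLike 𝕜] {b : ℕ → 𝕜} {C : ℝ} {z : 𝕜}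

lemma summable_mul_pow_of_norm_le (hb : ∀ n, ‖b n‖ ≤ C) (hz : ‖z‖ < 1) :
    Summable fun n ↦ b n * z ^ n := by
  refine .of_norm_bounded
    ((summable_geometric_of_lt_one (norm_nonneg z) hz).mul_left C) fun n ↦ ?_
  rw [norm_mul, norm_pow]
  gcongr
  exact hb n

lemma hasDerivAt_tsum_mul_pow_succ_div (hb : ∀ n, ‖b n‖ ≤ C) (hz : ‖z‖ < 1) :
    HasDerivAt (fun w ↦ ∑' n, b n * w ^ (n + 1) / (n + 1)) (∑' n, b n * z ^ n) z := by
  obtain ⟨r, hzr, hr⟩ := exists_between hz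
  have hr₀ : 0 < r := (norm_nonneg z).trans_lt hzr
  have hC : 0 ≤ C := (norm_nonneg _).trans (hb 0)
  refine hasDerivAt_tsum_of_isPreconnected (t := Metric.ball 0 r) (y₀ := 0)
    (g := fun n w ↦ b n * w ^ (n + 1) / (n + 1)) (g' := fun n w ↦ b n * w ^ n)
    ((summable_geometric_of_lt_one hr₀.le hr).mul_left C)
    Metric.isOpen_ball (convex_ball 0 r).isPreconnected (fun n w _ ↦ ?_) (fun n w hw ↦ ?_)
    (Metric.mem_ball_self hr₀) ?_ (mem_ball_zero_iff.mpr hzr)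
  · refine (((hasDerivAt_pow (n + 1) w).const_mul (b n)).div_const _).congr_deriv ?_
    have := Nat.cast_add_one_ne_zero (R := 𝕜) n
    push_cast
    field_simp
  · rw [norm_mul, norm_pow]
    gcongr
    exacts [hb n, (mem_ball_zero_iff.mp hw).le]
  · simp

end PowerSeries

section ComplexLog

lemma one_sub_mem_slitPlane {z : ℂ} (hz : ‖z‖ ≤ 1) (hz₁ : z ≠ 1) : 1 - z ∈ Complex.slitPlane := by
  rw [Complex.mem_slitPlane_iff_not_le_zero, Complex.le_def]
  rintro ⟨hre, him⟩
  have hre_le := (Complex.re_le_norm z).trans hz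
  refine hz₁ (Complex.ext ?_ ?_)
  · simp at hre ⊢
    linarith
  · simpa using him

lemma log_norm_one_sub_I : Real.log ‖1 - I‖ = Real.log 2 / 2 := by
  have hnorm : ‖1 - I‖ = √2 := by
    rw [Complex.norm_def, Complex.normSq_apply]
    norm_num
  rw [hnorm, Real.log_sqrt zero_le_two]

lemma tendsto_mul_clog_nhds_zero : Tendsto (fun z : ℂ ↦ z * Complex.log z) (𝓝 0) (𝓝 0) := by
  have hbound (z : ℂ) : ‖z * Complex.log z‖ ≤ |‖z‖ * Real.log ‖z‖| + ‖z‖ * π := by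
    rw [norm_mul, abs_mul, abs_norm, ← mul_add]
    gcongr
    calc ‖Complex.log z‖ ≤ |(Complex.log z).re| + |(Complex.log z).im| :=
          Complex.norm_le_abs_re_add_abs_im _
      _ ≤ |Real.log ‖z‖| + π := by
          rw [Complex.log_re, Complex.log_im]
          gcongr
          exact Complex.abs_arg_le_pi z
  have hcont : Continuous fun z : ℂ ↦ |‖z‖ * Real.log ‖z‖| + ‖z‖ * π :=
    (Real.continuous_mul_log.comp continuous_norm).abs.add (by fun_prop)
  exact squeeze_zero_norm hbound (by simpa using hcont.tendsto 0)

lemma tendsto_sub_mul_clog_of_hasDerivAt {f : ℂ → ℂ} {f' a : ℂ} (hf : HasDerivAt f f' a)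
    (hf' : f' ≠ 0) (ha : f a = 0) :
    Tendsto (fun z ↦ (z - a) * Complex.log (f z)) (𝓝 a) (𝓝 0) := by
  have hO : (fun z ↦ z - a) =O[𝓝 a] f := by
    simpa [ha, Function.comp_def] using (hf.isTheta_sub hf').isBigO_symm
  have hlog : Tendsto (fun z ↦ f z * Complex.log (f z)) (𝓝 a) (𝓝 0) :=
    tendsto_mul_clog_nhds_zero.comp (ha ▸ hf.continuousAt.tendsto)
  exact (hO.mul (Asymptotics.isBigO_refl _ _)).trans_tendsto hlog

end ComplexLog

section IntegerComplement

variable {x : ℂ}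

lemma mem_integerComplement_of_im_pos (hx : 0 < x.im) : x ∈ Complex.integerComplement :=
  UpperHalfPlane.coe_mem_integerComplement ⟨x, hx⟩

lemma mem_integerComplement_of_norm_lt_one_s5 (hx : ‖x‖ < 1) (hx₀ : x ≠ 0) :
    x ∈ Complex.integerComplement := by
  rintro ⟨n, rfl⟩
  rw [Complex.norm_intCast] at hx
  have : n = 0 := Int.abs_lt_one_iff.mp (by exact_mod_cast hx)
  exact hx₀ (by simp [this])

end IntegerComplement

section Polylog

variable {s : ℕ} {z : ℂ}

lemma ofReal_riemannZeta_natCast_re (n : ℕ) : ((riemannZeta n).re : ℂ) = riemannZeta n := by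
  rw [← Complex.conj_eq_iff_re, ← riemannZeta_conj, Complex.conj_natCast]

/-- The polylogarithm `Li_s(z) = ∑_{m ≥ 1} z ^ m / m ^ s` of natural order, with `m = n + 1`. -/
noncomputable def polylog (s : ℕ) (z : ℂ) : ℂ := ∑' n : ℕ, z ^ (n + 1) / ((n : ℂ) + 1) ^ s

lemma polylog_eq_tsum_pow_div_pow (hs : s ≠ 0) (z : ℂ) :
    polylog s z = ∑' n : ℕ, z ^ n / (n : ℂ) ^ s := by
  have hsupp : Function.support (fun n : ℕ ↦ z ^ n / (n : ℂ) ^ s) ⊆ Set.range Nat.succ := by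
    intro n hn
    rw [Nat.range_succ, Set.mem_ofPred_eq, Nat.pos_iff_ne_zero]
    rintro rfl
    simp [hs] at hn
  simpa [polylog] using Nat.succ_injective.tsum_eq hsupp

lemma polylog_one_left (hz : ‖z‖ < 1) : polylog 1 z = -Complex.log (1 - z) := by
  simpa [polylog_eq_tsum_pow_div_pow one_ne_zero] using
    (Complex.hasSum_taylorSeries_neg_log hz).tsum_eq

lemma polylog_one_right (hs : 2 ≤ s) : polylog s 1 = riemannZeta s := by
  simp [polylog_eq_tsum_pow_div_pow (show s ≠ 0 by lia), zeta_nat_eq_tsum_of_gt_one hs]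

lemma hasDerivAt_polylog_succ (hz : ‖z‖ < 1) (hz₀ : z ≠ 0) :
    HasDerivAt (polylog (s + 1)) (polylog s z / z) z := by
  have hb (n : ℕ) : ‖(((n : ℂ) + 1) ^ s)⁻¹‖ ≤ 1 := by
    rw [norm_inv, norm_pow]
    refine inv_le_one_of_one_le₀ (one_le_pow₀ ?_)
    rw [← Nat.cast_succ, Complex.norm_natCast]
    exact_mod_cast n.succ_pos
  convert! hasDerivAt_tsum_mul_pow_succ_div hb hz using 1
  · ext w
    exact tsum_congr fun n ↦ by rw [pow_succ (_ + 1)]; field_simp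
  · rw [polylog, ← tsum_div_const]
    exact tsum_congr fun n ↦ by rw [pow_succ]; field_simp

lemma norm_pow_div_natCast_pow_le (hs : 2 ≤ s) (hz : ‖z‖ ≤ 1) (n : ℕ) :
    ‖z ^ n / (n : ℂ) ^ s‖ ≤ 1 / (n : ℝ) ^ 2 := by
  obtain rfl | hn := n.eq_zero_or_pos
  · simp [show s ≠ 0 by lia]
  · rw [norm_div, norm_pow, norm_pow, Complex.norm_natCast]
    gcongr
    exacts [pow_le_one₀ (norm_nonneg z) hz, Nat.one_le_cast.mpr hn]

lemma continuousOn_polylog (hs : 2 ≤ s) : ContinuousOn (polylog s) (Metric.closedBall 0 1) := by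
  rw [funext (polylog_eq_tsum_pow_div_pow (by lia))]
  exact continuousOn_tsum (fun n ↦ by fun_prop) hasSum_zeta_two.summable
    fun n z hz ↦ norm_pow_div_natCast_pow_le hs (mem_closedBall_zero_iff.mp hz) n

lemma polylog_eq_tsum_odd_add (hs : 2 ≤ s) (hz : ‖z‖ ≤ 1) :
    polylog s z =
      ∑' k : ℕ, z ^ (2 * k + 1) / (2 * (k : ℂ) + 1) ^ s + polylog s (z ^ 2) / 2 ^ s := by
  have hs₀ : s ≠ 0 := by lia
  have hsum : Summable fun n : ℕ ↦ z ^ n / (n : ℂ) ^ s :=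
    .of_norm_bounded hasSum_zeta_two.summable (norm_pow_div_natCast_pow_le hs hz)
  have heven : Summable fun k : ℕ ↦ z ^ (2 * k) / ((2 * k : ℕ) : ℂ) ^ s :=
    hsum.comp_injective (i := (2 * ·)) fun a b h ↦ by simpa using h
  have hodd : Summable fun k : ℕ ↦ z ^ (2 * k + 1) / ((2 * k + 1 : ℕ) : ℂ) ^ s :=
    hsum.comp_injective (i := (2 * · + 1)) fun a b h ↦ by simpa using h
  rw [polylog_eq_tsum_pow_div_pow hs₀, polylog_eq_tsum_pow_div_pow hs₀, ← tsum_div_const,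
    ← tsum_even_add_odd (f := fun n : ℕ ↦ z ^ n / (n : ℂ) ^ s) heven hodd, add_comm]
  congr 1
  · push_cast
    rfl
  · refine tsum_congr fun k ↦ ?_
    rw [pow_mul, Nat.cast_mul, mul_pow, div_div, mul_comm (_ ^ s), Nat.cast_ofNat]

lemma polylog_neg_one (hs : 2 ≤ s) : polylog s (-1) = (2 / 2 ^ s - 1) * riemannZeta s := by
  have hone := polylog_eq_tsum_odd_add (z := 1) hs (by simp)
  have hneg := polylog_eq_tsum_odd_add (z := -1) hs (by simp)
  simp only [one_pow, polylog_one_right hs] at hone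
  simp only [neg_one_sq, polylog_one_right hs, (odd_two_mul_add_one _).neg_one_pow, neg_div,
    tsum_neg] at hneg
  linear_combination hneg + hone

lemma polylog_I (hs : 2 ≤ s) :
    polylog s I = ((2 / 2 ^ s - 1) / 2 ^ s * (riemannZeta s).re : ℝ) +
      (∑' k : ℕ, (-1) ^ k / (2 * (k : ℝ) + 1) ^ s : ℝ) * I := by
  have hodd (k : ℕ) : I ^ (2 * k + 1) / (2 * (k : ℂ) + 1) ^ s =
      ((-1) ^ k / (2 * (k : ℝ) + 1) ^ s : ℝ) * I := by
    rw [pow_succ, pow_mul, Complex.I_sq]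
    push_cast
    ring
  rw [polylog_eq_tsum_odd_add hs (by simp), Complex.I_sq, polylog_neg_one hs, tsum_congr hodd,
    tsum_mul_right, ← Complex.ofReal_tsum, Complex.ofReal_mul, ofReal_riemannZeta_natCast_re]
  push_cast
  ring

lemma polylog_I_re (hs : 2 ≤ s) :
    (polylog s I).re = (2 / 2 ^ s - 1) / 2 ^ s * (riemannZeta s).re := by
  rw [polylog_I hs, ← Complex.mk_eq_add_mul_I]

lemma polylog_I_im (hs : 2 ≤ s) :
    (polylog s I).im = ∑' k : ℕ, (-1) ^ k / (2 * (k : ℝ) + 1) ^ s := by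
  rw [polylog_I hs, ← Complex.mk_eq_add_mul_I]

end Polylog

section EvenZetaValues

variable {x : ℂ}

lemma norm_riemannZeta_natCast_le {k : ℕ} (hk : 2 ≤ k) : ‖riemannZeta k‖ ≤ π ^ 2 / 6 := by
  rw [← polylog_one_right hk, polylog_eq_tsum_pow_div_pow (by lia)]
  exact tsum_of_norm_bounded hasSum_zeta_two (norm_pow_div_natCast_pow_le hk norm_one.le)

lemma norm_riemannZeta_two_mul_le (n : ℕ) : ‖riemannZeta (2 * n)‖ ≤ π ^ 2 / 6 := by
  obtain _ | n := n
  · have := Real.pi_gt_three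
    norm_num [riemannZeta_zero]
    nlinarith
  · exact_mod_cast norm_riemannZeta_natCast_le (k := 2 * (n + 1)) (by lia)

lemma riemannZeta_two_mul_succ_mul_pow (x : ℂ) (n : ℕ) :
    riemannZeta (2 * (n + 1 : ℕ)) * x ^ (2 * (n + 1)) =
      ∑' k : ℕ, (x ^ 2 / ((k : ℂ) + 1) ^ 2) ^ (n + 1) := by
  have hzeta := polylog_one_right (s := 2 * (n + 1)) (by lia)
  push_cast at hzeta ⊢
  rw [← hzeta, polylog, ← tsum_mul_right]
  refine tsum_congr fun k ↦ ?_
  rw [one_pow, div_pow, ← pow_mul, ← pow_mul, one_div_mul_eq_div]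

lemma norm_sq_lt_one (hx : ‖x‖ < 1) : ‖x ^ 2‖ < 1 := by
  rw [norm_pow]
  exact pow_lt_one₀ (norm_nonneg x) hx two_ne_zero

lemma norm_sq_div_succ_sq (x : ℂ) (k : ℕ) :
    ‖x ^ 2 / ((k : ℂ) + 1) ^ 2‖ = ‖x ^ 2‖ * (1 / ((k + 1 : ℕ) : ℝ) ^ 2) := by
  rw [← Nat.cast_succ, norm_div, norm_pow _ 2, norm_pow _ 2, Complex.norm_natCast, mul_one_div]

lemma norm_sq_div_succ_sq_le (x : ℂ) (k : ℕ) : ‖x ^ 2 / ((k : ℂ) + 1) ^ 2‖ ≤ ‖x ^ 2‖ := by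
  rw [norm_sq_div_succ_sq]
  exact mul_le_of_le_one_right (norm_nonneg _)
    (div_le_one_of_le₀ (one_le_pow₀ (by simp)) (by positivity))

lemma summable_sq_div_succ_sq_pow_succ (hx : ‖x‖ < 1) :
    Summable (Function.uncurry fun n k : ℕ ↦ (x ^ 2 / ((k : ℂ) + 1) ^ 2) ^ (n + 1)) := by
  have hgeom : Summable fun n : ℕ ↦ ‖x ^ 2‖ ^ n :=
    summable_geometric_of_lt_one (norm_nonneg _) (norm_sq_lt_one hx)
  have hsq : Summable fun k : ℕ ↦ ‖x ^ 2 / ((k : ℂ) + 1) ^ 2‖ := by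
    simp_rw [norm_sq_div_succ_sq]
    exact ((summable_nat_add_iff 1).mpr hasSum_zeta_two.summable).mul_left _
  refine .of_norm_bounded (hgeom.mul_of_nonneg hsq (fun _ ↦ by positivity)
    fun _ ↦ by positivity) fun ⟨n, k⟩ ↦ ?_
  rw [Function.uncurry_apply_pair, norm_pow, pow_succ]
  gcongr
  exact norm_sq_div_succ_sq_le x k

lemma tsum_sq_div_succ_sq_pow_succ (hx : ‖x‖ < 1) (hxℤ : x ∈ Complex.integerComplement) (k : ℕ) :
    ∑' n : ℕ, (x ^ 2 / ((k : ℂ) + 1) ^ 2) ^ (n + 1) =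
      -(x / 2) * (1 / (x - (k + 1)) + 1 / (x + (k + 1))) := by
  rw [tsum_congr fun n ↦ pow_succ _ n, tsum_mul_right,
    tsum_geometric_of_norm_lt_one ((norm_sq_div_succ_sq_le x k).trans_lt (norm_sq_lt_one hx))]
  have hk : (k : ℂ) + 1 ≠ 0 := Nat.cast_add_one_ne_zero k
  have hadd : x + (k + 1) ≠ 0 := by
    simpa using Complex.integerComplement_add_ne_zero hxℤ (k + 1)
  have hsub : x - (k + 1) ≠ 0 := by
    simpa [sub_eq_add_neg, add_comm] using Complex.integerComplement_add_ne_zero hxℤ (-(k + 1))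
  have hfactor : 1 - x ^ 2 / ((k : ℂ) + 1) ^ 2 =
      -((x - (k + 1)) * (x + (k + 1))) / (k + 1) ^ 2 := by
    field_simp
    ring
  rw [hfactor]
  field_simp
  ring

lemma tsum_riemannZeta_two_mul_mul_pow (hx : ‖x‖ < 1) (hxℤ : x ∈ Complex.integerComplement) :
    ∑' n : ℕ, riemannZeta (2 * n) * x ^ (2 * n) = -(π * x * Complex.cot (π * x)) / 2 := by
  have hx₀ : x ≠ 0 := Complex.integerComplement.ne_zero hxℤ
  have hsum : Summable fun n : ℕ ↦ riemannZeta (2 * n) * x ^ (2 * n) := by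
    simp_rw [pow_mul]
    exact summable_mul_pow_of_norm_le norm_riemannZeta_two_mul_le (norm_sq_lt_one hx)
  calc ∑' n : ℕ, riemannZeta (2 * n) * x ^ (2 * n)
      = -1 / 2 + ∑' n : ℕ, ∑' k : ℕ, (x ^ 2 / ((k : ℂ) + 1) ^ 2) ^ (n + 1) := by
        simp_rw [hsum.tsum_eq_zero_add, riemannZeta_two_mul_succ_mul_pow]
        simp [riemannZeta_zero]
    _ = -1 / 2 + ∑' k : ℕ, -(x / 2) * (1 / (x - (k + 1)) + 1 / (x + (k + 1))) := by
        rw [← (summable_sq_div_succ_sq_pow_succ hx).tsum_comm,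
          tsum_congr (tsum_sq_div_succ_sq_pow_succ hx hxℤ)]
    _ = -(π * x * Complex.cot (π * x)) / 2 := by
        rw [tsum_mul_left, ← cot_series_rep' hxℤ]
        field_simp
        ring

/-- The primitive `∑ ζ(2n) u ^ (n + 1) / (n + 1)`, vanishing at `0`, of the generating function
`∑ ζ(2n) u ^ n` of the even zeta values. -/
noncomputable def evenZetaPrimitive (u : ℂ) : ℂ :=
  ∑' n : ℕ, riemannZeta (2 * n) * u ^ (n + 1) / (n + 1)

lemma tsum_riemannZeta_two_mul_div_succ_mul_pow {a : ℂ} (ha : a ≠ 0) :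
    ∑' n : ℕ, riemannZeta (2 * n) / ((n + 1) * a ^ n) = a * evenZetaPrimitive a⁻¹ := by
  rw [evenZetaPrimitive, ← tsum_mul_left]
  refine tsum_congr fun n ↦ ?_
  rw [pow_succ, inv_pow]
  field_simp

lemma hasDerivAt_evenZetaPrimitive {u : ℂ} (hu : ‖u‖ < 1) :
    HasDerivAt evenZetaPrimitive (∑' n : ℕ, riemannZeta (2 * n) * u ^ n) u :=
  hasDerivAt_tsum_mul_pow_succ_div norm_riemannZeta_two_mul_le hu

lemma hasDerivAt_evenZetaPrimitive_sq (hx : ‖x‖ < 1) (hxℤ : x ∈ Complex.integerComplement) :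
    HasDerivAt (fun x ↦ evenZetaPrimitive (x ^ 2)) (-(π * x ^ 2 * Complex.cot (π * x))) x := by
  refine ((hasDerivAt_evenZetaPrimitive (norm_sq_lt_one hx)).comp x
    (hasDerivAt_pow 2 x)).congr_deriv ?_
  simp_rw [← pow_mul, tsum_riemannZeta_two_mul_mul_pow hx hxℤ]
  ring

lemma evenZetaPrimitive_ofReal_im (u : ℝ) : (evenZetaPrimitive u).im = 0 := by
  have hterm (n : ℕ) : riemannZeta (2 * n) * (u : ℂ) ^ (n + 1) / (n + 1) =
      ((riemannZeta (2 * n)).re * u ^ (n + 1) / (n + 1) : ℝ) := by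
    have hreal : ((riemannZeta (2 * n)).re : ℂ) = riemannZeta (2 * n) := by
      exact_mod_cast ofReal_riemannZeta_natCast_re (2 * n)
    push_cast
    rw [hreal]
  rw [evenZetaPrimitive, tsum_congr hterm, ← Complex.ofReal_tsum, Complex.ofReal_im]

end EvenZetaValues

section Nome

variable {x : ℂ}

/-- The nome `q = e ^ (2πix)`, which maps the upper half-plane to the unit disc. -/
noncomputable def nome (x : ℂ) : ℂ := Complex.exp (2 * π * I * x)

lemma nome_ne_zero (x : ℂ) : nome x ≠ 0 := Complex.exp_ne_zero _

lemma nome_zero : nome 0 = 1 := by simp [nome]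

lemma nome_one_div_four : nome (1 / 4) = I := by
  rw [nome, show (2 * π * I * (1 / 4) : ℂ) = π / 2 * I by ring, Complex.exp_pi_div_two_mul_I]

lemma norm_nome (x : ℂ) : ‖nome x‖ = Real.exp (-(2 * π * x.im)) := by
  simp [nome, Complex.norm_exp]

lemma norm_nome_le_one (hx : 0 ≤ x.im) : ‖nome x‖ ≤ 1 := by
  rw [norm_nome, Real.exp_le_one_iff, neg_nonpos]
  positivity

lemma norm_nome_lt_one (hx : 0 < x.im) : ‖nome x‖ < 1 := by
  rw [norm_nome, Real.exp_lt_one_iff, neg_lt_zero]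
  positivity

lemma nome_eq_one_iff : nome x = 1 ↔ x ∉ Complex.integerComplement := by
  have hπ : (2 * π * I : ℂ) ≠ 0 := Complex.two_pi_I_ne_zero
  simp_rw [nome, Complex.exp_eq_one_iff, mul_comm _ (2 * π * I : ℂ), mul_right_inj' hπ,
    Complex.mem_integerComplement_iff, not_not, eq_comm]

lemma hasDerivAt_nome (x : ℂ) : HasDerivAt nome (2 * π * I * nome x) x :=
  ((hasDerivAt_id x).const_mul (2 * π * I)).cexp.congr_deriv (by rw [nome, id]; ring)

lemma continuous_nome : Continuous nome :=
  continuous_iff_continuousAt.mpr fun x ↦ (hasDerivAt_nome x).continuousAt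

lemma one_sub_nome_mem_slitPlane (hx : 0 ≤ x.im) (hxℤ : x ∈ Complex.integerComplement) :
    1 - nome x ∈ Complex.slitPlane :=
  one_sub_mem_slitPlane (norm_nome_le_one hx) (mt nome_eq_one_iff.mp (not_not.mpr hxℤ))

lemma cot_pi_mul_eq_nome (x : ℂ) :
    Complex.cot (π * x) = (nome x + 1) / (I * (1 - nome x)) :=
  Complex.cot_pi_eq_exp_ratio x

lemma hasDerivAt_polylog_succ_nome (s : ℕ) (hx : 0 < x.im) :
    HasDerivAt (fun x ↦ polylog (s + 1) (nome x)) (2 * π * I * polylog s (nome x)) x := by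
  refine ((hasDerivAt_polylog_succ (norm_nome_lt_one hx) (nome_ne_zero x)).comp x
    (hasDerivAt_nome x)).congr_deriv ?_
  have := nome_ne_zero x
  field_simp

end Nome

section CotPrimitive

variable {x : ℂ}

/-- A primitive of `-π x ^ 2 cot (π x)` on the upper half-plane, obtained by expanding the
cotangent in powers of the nome and integrating by parts. At `x = 0` the convention `log 0 = 0` is
harmless, since `x ^ 2 log (1 - q)` tends to `0` there. -/
noncomputable def cotPrimitive (x : ℂ) : ℂ :=
  π * I * x ^ 3 / 3 - x ^ 2 * Complex.log (1 - nome x) - x * polylog 2 (nome x) / (π * I) -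
    polylog 3 (nome x) / (2 * π ^ 2)

lemma cotPrimitive_zero : cotPrimitive 0 = -riemannZeta 3 / (2 * π ^ 2) := by
  simp [cotPrimitive, nome_zero, polylog_one_right, neg_div]

lemma hasDerivAt_cotPrimitive (hx : 0 < x.im) :
    HasDerivAt cotPrimitive (-(π * x ^ 2 * Complex.cot (π * x))) x := by
  have hxℤ := mem_integerComplement_of_im_pos hx
  have hslit := one_sub_nome_mem_slitPlane hx.le hxℤ
  have hlog := ((hasDerivAt_nome x).const_sub 1).clog hslit
  have hcubic := ((hasDerivAt_pow 3 x).const_mul (π * I : ℂ)).div_const 3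
  have hone : HasDerivAt (fun x ↦ x ^ 2 * Complex.log (1 - nome x)) _ x :=
    (hasDerivAt_pow 2 x).mul hlog
  have htwo := ((hasDerivAt_id x).mul (hasDerivAt_polylog_succ_nome 1 hx)).div_const (π * I)
  have hthree := (hasDerivAt_polylog_succ_nome 2 hx).div_const (2 * π ^ 2)
  refine (((hcubic.sub hone).sub htwo).sub hthree).congr_deriv ?_
  have hπ : (π : ℂ) ≠ 0 := Complex.ofReal_ne_zero.mpr Real.pi_ne_zero
  have hne := Complex.slitPlane_ne_zero hslit
  rw [polylog_one_left (norm_nome_lt_one hx), cot_pi_mul_eq_nome, id]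
  field_simp
  ring_nf
  simp only [Complex.I_sq]
  ring_nf

lemma tendsto_mul_log_one_sub_nome :
    Tendsto (fun x ↦ x * Complex.log (1 - nome x)) (𝓝 0) (𝓝 0) := by
  simpa using tendsto_sub_mul_clog_of_hasDerivAt ((hasDerivAt_nome 0).const_sub 1)
    (by simp [nome_zero, Real.pi_ne_zero]) (by simp [nome_zero])

lemma continuousOn_sq_mul_log_one_sub_nome :
    ContinuousOn (fun x ↦ x ^ 2 * Complex.log (1 - nome x))
      (Metric.ball 0 1 ∩ {x | 0 ≤ x.im}) := by
  rintro x ⟨hx, hxim⟩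
  refine ContinuousAt.continuousWithinAt ?_
  obtain rfl | hx₀ := eq_or_ne x 0
  · simpa [ContinuousAt, pow_two, mul_assoc] using tendsto_id.mul tendsto_mul_log_one_sub_nome
  · have hxℤ := mem_integerComplement_of_norm_lt_one_s5 (mem_ball_zero_iff.mp hx) hx₀
    exact (continuousAt_id.pow 2).mul
      ((continuousAt_const.sub continuous_nome.continuousAt).clog
        (one_sub_nome_mem_slitPlane hxim hxℤ))

lemma continuousOn_polylog_nome {s : ℕ} (hs : 2 ≤ s) :
    ContinuousOn (fun x ↦ polylog s (nome x)) {x | 0 ≤ x.im} :=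
  (continuousOn_polylog hs).comp continuous_nome.continuousOn
    fun _ hx ↦ mem_closedBall_zero_iff.mpr (norm_nome_le_one hx)

lemma continuousOn_cotPrimitive :
    ContinuousOn cotPrimitive (Metric.ball 0 1 ∩ {x | 0 ≤ x.im}) := by
  have hpolylog {s : ℕ} (hs : 2 ≤ s) := (continuousOn_polylog_nome hs).mono
    (Set.inter_subset_right (s := Metric.ball (0 : ℂ) 1))
  refine ((ContinuousOn.sub ?_ continuousOn_sq_mul_log_one_sub_nome).sub ?_).sub ?_
  · fun_prop
  · exact (continuousOn_id.mul (hpolylog le_rfl)).div_const _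
  · exact (hpolylog (by lia)).div_const _

end CotPrimitive

section EvenZetaPrimitive

variable {x : ℂ}

lemma continuousOn_evenZetaPrimitive_sq :
    ContinuousOn (fun x ↦ evenZetaPrimitive (x ^ 2)) (Metric.ball 0 1) := fun _ hx ↦
  ((hasDerivAt_evenZetaPrimitive (norm_sq_lt_one (mem_ball_zero_iff.mp hx))).continuousAt.comp
    (f := (· ^ 2)) (continuousAt_id.pow 2)).continuousWithinAt

lemma exists_evenZetaPrimitive_sq_sub_cotPrimitive_eq_const :
    ∃ c, Set.EqOn (fun x ↦ evenZetaPrimitive (x ^ 2) - cotPrimitive x) (fun _ ↦ c)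
      (Metric.ball 0 1 ∩ {x | 0 ≤ x.im}) := by
  have hopen : IsOpen {x : ℂ | 0 < x.im} := isOpen_lt continuous_const Complex.continuous_im
  have hderiv : ∀ x ∈ Metric.ball (0 : ℂ) 1 ∩ {x | 0 < x.im},
      HasDerivAt (fun x ↦ evenZetaPrimitive (x ^ 2) - cotPrimitive x) 0 x := fun x hx ↦
    ((hasDerivAt_evenZetaPrimitive_sq (mem_ball_zero_iff.mp hx.1)
      (mem_integerComplement_of_im_pos hx.2)).sub (hasDerivAt_cotPrimitive hx.2)).congr_deriv
      (sub_self _)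
  obtain ⟨c, hc⟩ := (Metric.isOpen_ball.inter hopen).exists_is_const_of_deriv_eq_zero
    ((convex_ball 0 1).inter (convex_halfSpace_im_gt 0)).isPreconnected
    (fun x hx ↦ (hderiv x hx).differentiableAt.differentiableWithinAt)
    fun x hx ↦ (hderiv x hx).deriv
  have hcont := (continuousOn_evenZetaPrimitive_sq.mono Set.inter_subset_left).sub
    continuousOn_cotPrimitive
  refine ⟨c, Set.EqOn.of_subset_closure hc hcont continuousOn_const
    (Set.inter_subset_inter_right _ fun _ ↦ le_of_lt (α := ℝ)) ?_⟩
  rw [← Complex.closure_setOfPred_lt_im]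
  exact Metric.isOpen_ball.inter_closure

theorem evenZetaPrimitive_sq_eq_cotPrimitive_add (hx : ‖x‖ < 1) (hxim : 0 ≤ x.im) :
    evenZetaPrimitive (x ^ 2) = cotPrimitive x + riemannZeta 3 / (2 * π ^ 2) := by
  obtain ⟨c, hc⟩ := exists_evenZetaPrimitive_sq_sub_cotPrimitive_eq_const
  have hconst : c = riemannZeta 3 / (2 * π ^ 2) := by
    simpa [cotPrimitive_zero, evenZetaPrimitive, neg_div] using
      (hc ⟨Metric.mem_ball_self one_pos, le_refl (0 : ℝ)⟩).symm
  have hxc := hc ⟨mem_ball_zero_iff.mpr hx, hxim⟩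
  rw [← hconst, ← sub_eq_iff_eq_add']
  exact hxc

lemma cotPrimitive_ofReal_re (t : ℝ) :
    (cotPrimitive t).re = -t ^ 2 * Real.log ‖1 - nome t‖ - t * (polylog 2 (nome t)).im / π -
      (polylog 3 (nome t)).re / (2 * π ^ 2) := by
  have hcoeff : cotPrimitive t = (π * t ^ 3 / 3 : ℝ) * I - (t ^ 2 : ℝ) * Complex.log (1 - nome t) +
      (t / π : ℝ) * (polylog 2 (nome t) * I) - ((2 * π ^ 2)⁻¹ : ℝ) * polylog 3 (nome t) := by
    rw [cotPrimitive, mul_comm (π : ℂ) I, ← div_div _ I, Complex.div_I]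
    push_cast
    ring
  rw [hcoeff, Complex.sub_re, Complex.add_re, Complex.sub_re, Complex.re_ofReal_mul,
    Complex.re_ofReal_mul, Complex.re_ofReal_mul, Complex.re_ofReal_mul, Complex.I_re,
    Complex.mul_I_re, Complex.log_re]
  ring

theorem evenZetaPrimitive_ofReal_sq {t : ℝ} (ht : |t| < 1) :
    evenZetaPrimitive ((t ^ 2 : ℝ) : ℂ) =
      (-t ^ 2 * Real.log ‖1 - nome t‖ - t * (polylog 2 (nome t)).im / π +
        ((riemannZeta 3).re - (polylog 3 (nome t)).re) / (2 * π ^ 2) : ℝ) := by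
  refine Complex.ext ?_ ((evenZetaPrimitive_ofReal_im _).trans (Complex.ofReal_im _).symm)
  have hden : (2 * π ^ 2 : ℂ) = (2 * π ^ 2 : ℝ) := by push_cast; rfl
  rw [Complex.ofReal_re, Complex.ofReal_pow,
    evenZetaPrimitive_sq_eq_cotPrimitive_add (by simpa using ht) (Complex.ofReal_im t).ge,
    Complex.add_re, cotPrimitive_ofReal_re, hden, Complex.div_ofReal_re]
  ring

end EvenZetaPrimitive

theorem stmt5 :
    ∑' n : ℕ, riemannZeta (2 * n) / ((n + 1) * 16 ^ n) =
      -(1 / 2) * (Real.log 2 : ℂ) + 35 * riemannZeta 3 / (4 * (π : ℂ) ^ 2) -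
        4 * (catalanConst : ℂ) / (π : ℂ) := by
  have hsq : (16⁻¹ : ℂ) = ((1 / 4) ^ 2 : ℝ) := by norm_num
  have hzeta : ((riemannZeta 3).re : ℂ) = riemannZeta 3 := ofReal_riemannZeta_natCast_re 3
  have hnome : nome ((1 / 4 : ℝ) : ℂ) = I := by simpa using nome_one_div_four
  rw [tsum_riemannZeta_two_mul_div_succ_mul_pow (by norm_num), hsq,
    evenZetaPrimitive_ofReal_sq (by norm_num [abs_of_pos]), hnome, log_norm_one_sub_I,
    polylog_I_im le_rfl, polylog_I_re (by lia), ← catalanConst]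
  push_cast
  rw [hzeta]
  have hπ : (π : ℂ) ≠ 0 := Complex.ofReal_ne_zero.mpr Real.pi_ne_zero
  field_simp
  ring
end

section
/- The series ∑_{n=1}^∞ ζ(2n)/(n(2n+1)·16^n) equals 2G/π - 1 + log(π/2), where G is Catalan's constant. -/
open Real

/-!
Taking logarithms in Euler's product for `sin (π t) / (π t)` and expanding each factor gives
`∑ ζ(2n) t ^ (2n) / n = -log (sinc (π t))` for `|t| < 1`. Integrating this from `0` to `1 / 4`
produces the factors `1 / ((2n + 1) 16 ^ n)` and leaves the integral of `log ∘ sin` over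
`[0, π / 4]`. The latter is half of `∫ log tan + ∫ (log sin + log cos)`: the second integral is
`∫ log sin` over `[0, π / 2]`, and in the first the substitution `t = tan u` followed by the
geometric series for `1 / (1 + t ^ 2)` produces Catalan's constant.
-/

open MeasureTheory Set Filter Topology

section Catalan

theorem intervalIntegrable_pow_mul_log (n : ℕ) (a b : ℝ) :
    IntervalIntegrable (fun t : ℝ ↦ t ^ n * log t) volume a b :=
  intervalIntegral.intervalIntegrable_log'.continuousOn_mul (by fun_prop)

theorem integral_pow_mul_log (n : ℕ) (a b : ℝ) :
    ∫ t in a..b, t ^ n * log t =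
      (b ^ (n + 1) * log b / (n + 1) - b ^ (n + 1) / (n + 1) ^ 2) -
        (a ^ (n + 1) * log a / (n + 1) - a ^ (n + 1) / (n + 1) ^ 2) := by
  refine integral_eq_of_hasDerivAt_off_countable
    (fun t : ℝ ↦ t ^ (n + 1) * log t / (n + 1) - t ^ (n + 1) / (n + 1) ^ 2) _
    (countable_singleton 0) ?_ ?_ (intervalIntegrable_pow_mul_log n a b)
  · have : Continuous fun t : ℝ ↦ t ^ n * (t * log t) :=
      (continuous_pow n).mul continuous_mul_log
    simp only [pow_succ, mul_assoc]
    fun_prop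
  · rintro t ⟨-, ht⟩
    have ht : t ≠ 0 := ht
    refine ((((hasDerivAt_pow (n + 1) t).mul (hasDerivAt_log ht)).div_const _).sub
      ((hasDerivAt_pow (n + 1) t).div_const _)).congr_deriv ?_
    push_cast
    field_simp
    ring

theorem integral_even_pow_mul_log_zero_one (n : ℕ) :
    ∫ t in (0 : ℝ)..1, t ^ (2 * n) * log t = -(1 / (2 * (n : ℝ) + 1) ^ 2) := by
  simp [integral_pow_mul_log]

theorem summable_one_div_two_mul_add_one_sq :
    Summable fun n : ℕ ↦ 1 / (2 * (n : ℝ) + 1) ^ 2 := by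
  have h := (Real.summable_one_div_nat_pow.2 one_lt_two).comp_injective
    (fun m n (h : 2 * m + 1 = 2 * n + 1) ↦ by lia)
  simpa [Function.comp_def] using h

theorem integral_log_div_one_add_sq :
    ∫ t in (0 : ℝ)..1, log t / (1 + t ^ 2) = -catalanConst := by
  let F (n : ℕ) (t : ℝ) : ℝ := (-1) ^ n * (t ^ (2 * n) * log t)
  have hF_int (n : ℕ) : IntegrableOn (F n) (Ioc 0 1) :=
    ((intervalIntegrable_pow_mul_log (2 * n) 0 1).const_mul ((-1) ^ n)).1
  have hF_norm (n : ℕ) : ∫ t in Ioc 0 1, ‖F n t‖ = 1 / (2 * (n : ℝ) + 1) ^ 2 := by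
    have : ∀ t ∈ Ioc (0 : ℝ) 1, ‖F n t‖ = -(t ^ (2 * n) * log t) := fun t ht ↦ by
      simp [F, abs_of_pos ht.1, abs_of_nonpos (log_nonpos ht.1.le ht.2)]
    rw [setIntegral_congr_fun measurableSet_Ioc this,
      ← intervalIntegral.integral_of_le zero_le_one, intervalIntegral.integral_neg,
      integral_even_pow_mul_log_zero_one, neg_neg]
  have hF_eval (n : ℕ) : ∫ t in Ioc 0 1, F n t = -((-1) ^ n / (2 * (n : ℝ) + 1) ^ 2) := by
    rw [← intervalIntegral.integral_of_le zero_le_one, intervalIntegral.integral_const_mul,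
      integral_even_pow_mul_log_zero_one]
    ring
  have hF_tsum : ∀ t ∈ Ioo (0 : ℝ) 1, ∑' n, F n t = log t / (1 + t ^ 2) := fun t ht ↦ by
    have ht2 : |-t ^ 2| < 1 := by
      rw [abs_neg, abs_of_nonneg (sq_nonneg t)]
      exact pow_lt_one₀ ht.1.le ht.2 two_ne_zero
    have h := (hasSum_geometric_of_abs_lt_one ht2).mul_right (log t)
    rw [sub_neg_eq_add, inv_mul_eq_div] at h
    simpa only [F, neg_pow (t ^ 2), ← pow_mul, mul_assoc] using h.tsum_eq
  have hswap := integral_tsum_of_summable_integral_norm hF_int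
    (by simpa only [hF_norm] using summable_one_div_two_mul_add_one_sq)
  rw [intervalIntegral.integral_of_le zero_le_one, integral_Ioc_eq_integral_Ioo,
    ← setIntegral_congr_fun measurableSet_Ioo hF_tsum, ← integral_Ioc_eq_integral_Ioo, ← hswap]
  simp only [hF_eval, tsum_neg, catalanConst]

end Catalan

section LogSin

theorem integral_comp_tan {E : Type*} [NormedAddCommGroup E] [NormedSpace ℝ E] (g : ℝ → E)
    (a b : ℝ) :
    ∫ u in arctan a..arctan b, g (tan u) = ∫ t in a..b, (1 + t ^ 2)⁻¹ • g t := by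
  have h := intervalIntegral.integral_deriv_smul_comp_of_deriv_nonneg (g := g ∘ tan) (a := a)
    (b := b) continuous_arctan.continuousOn (fun t _ ↦ hasDerivAt_arctan t)
    (fun t _ ↦ by positivity)
  simpa only [Function.comp_apply, tan_arctan, one_div] using h.symm

-- Since `log 0 = 0` and `log (±1) = 0`, this also holds where `sin` or `cos` vanishes.
theorem log_tan (u : ℝ) : log (tan u) = log (sin u) - log (cos u) := by
  rw [tan_eq_sin_div_cos]
  rcases eq_or_ne (sin u) 0 with hs | hs
  · rcases sin_eq_zero_iff_cos_eq.1 hs with hc | hc <;> simp [hs, hc]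
  rcases eq_or_ne (cos u) 0 with hc | hc
  · rcases cos_eq_zero_iff_sin_eq.1 hc with hs | hs <;> simp [hs, hc]
  exact log_div hs hc

theorem integral_log_cos_eq_integral_log_sin (a b : ℝ) :
    ∫ u in a..b, log (cos u) = ∫ u in (π / 2 - b)..(π / 2 - a), log (sin u) := by
  simp only [← intervalIntegral.integral_comp_sub_left (fun u ↦ log (sin u)),
    sin_pi_div_two_sub]

theorem integral_log_sin_zero_pi_div_four :
    ∫ u in (0 : ℝ)..(π / 4), log (sin u) = -(π / 4) * log 2 - catalanConst / 2 := by
  have hsin (a b : ℝ) : IntervalIntegrable (fun u ↦ log (sin u)) volume a b :=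
    intervalIntegrable_log_sin
  have hcos (a b : ℝ) : IntervalIntegrable (fun u ↦ log (cos u)) volume a b :=
    intervalIntegrable_log_cos
  have hdiff : (∫ u in (0 : ℝ)..(π / 4), log (sin u)) - ∫ u in (0 : ℝ)..(π / 4), log (cos u) =
      -catalanConst := by
    rw [← intervalIntegral.integral_sub (hsin _ _) (hcos _ _)]
    simp only [← log_tan]
    rw [← arctan_zero, ← arctan_one, integral_comp_tan]
    simpa only [smul_eq_mul, inv_mul_eq_div] using integral_log_div_one_add_sq
  have hsum : (∫ u in (0 : ℝ)..(π / 4), log (sin u)) + ∫ u in (0 : ℝ)..(π / 4), log (cos u) =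
      -log 2 * π / 2 := by
    rw [integral_log_cos_eq_integral_log_sin, show π / 2 - π / 4 = π / 4 by ring, sub_zero,
      intervalIntegral.integral_add_adjacent_intervals (hsin _ _) (hsin _ _),
      integral_log_sin_zero_pi_div_two]
  linarith

end LogSin

section Sinc

theorem sinc_pos_of_abs_lt_pi {u : ℝ} (hu : |u| < π) : 0 < sinc u := by
  wlog h : 0 ≤ u generalizing u
  · rw [← sinc_neg]
    exact this (by rwa [abs_neg]) (by linarith)
  rcases h.eq_or_lt with rfl | h
  · simp
  · rw [sinc_of_ne_zero h.ne']
    exact div_pos (sin_pos_of_pos_of_lt_pi h (lt_of_abs_lt hu)) h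

-- At `u = 0` both sides vanish, because `log 0 = 0`.
theorem log_sinc {u : ℝ} (hu : sinc u ≠ 0) : log (sinc u) = log (sin u) - log u := by
  rcases eq_or_ne u 0 with rfl | h
  · simp
  · rw [sinc_of_ne_zero h] at hu ⊢
    exact log_div (div_ne_zero_iff.1 hu).1 h

theorem abs_le_abs_of_mem_uIcc_zero {u y : ℝ} (hu : u ∈ uIcc 0 y) : |u| ≤ |y| := by
  simpa only [sub_zero] using abs_sub_left_of_mem_uIcc hu

theorem integral_log_sinc {y : ℝ} (hy : |y| < π) :
    ∫ u in (0 : ℝ)..y, log (sinc u) = (∫ u in (0 : ℝ)..y, log (sin u)) - (y * log y - y) := by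
  have h : EqOn (fun u ↦ log (sinc u)) (fun u ↦ log (sin u) - log u) (uIcc 0 y) := fun u hu ↦
    log_sinc (sinc_pos_of_abs_lt_pi ((abs_le_abs_of_mem_uIcc_zero hu).trans_lt hy)).ne'
  rw [intervalIntegral.integral_congr h, intervalIntegral.integral_sub
    (by exact intervalIntegrable_log_sin) intervalIntegral.intervalIntegrable_log', integral_log]
  simp

theorem tendsto_prod_one_sub_sq_div_sinc (x : ℝ) :
    Tendsto (fun n : ℕ ↦ ∏ j ∈ Finset.range n, (1 - x ^ 2 / ((j : ℝ) + 1) ^ 2)) atTop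
      (𝓝 (sinc (π * x))) := by
  rcases eq_or_ne x 0 with rfl | hx
  · simp
  · have hπx : π * x ≠ 0 := mul_ne_zero pi_ne_zero hx
    rw [sinc_of_ne_zero hπx]
    refine ((tendsto_euler_sin_prod x).div_const (π * x)).congr fun n ↦ ?_
    rw [mul_div_cancel_left₀ _ hπx]

theorem abs_pi_mul_lt_pi {x : ℝ} (hx : |x| < 1) : |π * x| < π := by
  rw [abs_mul, abs_of_pos pi_pos]
  exact mul_lt_of_lt_one_right pi_pos hx

theorem sq_div_nat_add_one_sq_lt_one {x : ℝ} (hx : |x| < 1) (j : ℕ) :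
    x ^ 2 / ((j : ℝ) + 1) ^ 2 < 1 := by
  rw [← div_pow, sq_lt_one_iff_abs_lt_one, abs_div, div_lt_one (by positivity)]
  have : (0 : ℝ) ≤ j := j.cast_nonneg
  exact hx.trans_le (by rw [abs_of_pos] <;> linarith)

theorem hasSum_neg_log_one_sub_sq_div {x : ℝ} (hx : |x| < 1) :
    HasSum (fun j : ℕ ↦ -log (1 - x ^ 2 / ((j : ℝ) + 1) ^ 2)) (-log (sinc (π * x))) := by
  have hlt := sq_div_nat_add_one_sq_lt_one hx
  rw [hasSum_iff_tendsto_nat_of_nonneg fun j ↦ neg_nonneg.2 <|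
    log_nonpos (sub_nonneg.2 (hlt j).le) (sub_le_self 1 (by positivity))]
  have hsinc : sinc (π * x) ≠ 0 := (sinc_pos_of_abs_lt_pi (abs_pi_mul_lt_pi hx)).ne'
  refine ((tendsto_prod_one_sub_sq_div_sinc x).log hsinc).neg.congr fun n ↦ ?_
  rw [log_prod fun j _ ↦ (sub_pos.2 (hlt j)).ne', Finset.sum_neg_distrib]

end Sinc

section Zeta

theorem hasSum_of_hasSum_comm_of_nonneg {ι κ : Type*} {f : ι → κ → ℝ} {g : ι → ℝ} {h : κ → ℝ}
    {a : ℝ} (hf : ∀ i j, 0 ≤ f i j) (hg : ∀ i, HasSum (f i) (g i))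
    (hh : ∀ j, HasSum (fun i ↦ f i j) (h j)) (ha : HasSum g a) : HasSum h a := by
  have hsum : Summable (Function.uncurry f) := by
    exact (summable_prod_of_nonneg fun p ↦ hf p.1 p.2).2
      ⟨fun i ↦ (hg i).summable, ha.summable.congr fun i ↦ (hg i).tsum_eq.symm⟩
  have htsum : ∑' p, Function.uncurry f p = a := (hsum.hasSum.prod_fiberwise hg).unique ha
  rw [← htsum]
  exact ((Equiv.prodComm κ ι).hasSum_iff.2 hsum.hasSum).prod_fiberwise hh

theorem riemannZeta_natCast_eq_ofReal_tsum {k : ℕ} (hk : 1 < k) :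
    riemannZeta k = ((∑' j : ℕ, 1 / ((j : ℝ) + 1) ^ k : ℝ) : ℂ) := by
  rw [zeta_eq_tsum_one_div_nat_add_one_cpow (by simpa using hk)]
  push_cast
  simp only [Complex.cpow_natCast]

theorem ofReal_re_riemannZeta_natCast {k : ℕ} (hk : 1 < k) :
    ((riemannZeta k).re : ℂ) = riemannZeta k := by
  rw [riemannZeta_natCast_eq_ofReal_tsum hk, Complex.ofReal_re]

theorem hasSum_one_div_nat_add_one_pow {k : ℕ} (hk : 1 < k) :
    HasSum (fun j : ℕ ↦ 1 / ((j : ℝ) + 1) ^ k) (riemannZeta k).re := by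
  rw [riemannZeta_natCast_eq_ofReal_tsum hk, Complex.ofReal_re]
  have h := (summable_nat_add_iff 1).2 (Real.summable_one_div_nat_pow.2 hk)
  exact (h.congr fun j ↦ by rw [Nat.cast_add_one]).hasSum

theorem riemannZeta_natCast_re_nonneg {k : ℕ} (hk : 1 < k) : 0 ≤ (riemannZeta k).re :=
  (hasSum_one_div_nat_add_one_pow hk).nonneg fun j ↦ by positivity

theorem hasSum_riemannZeta_even_mul_pow_div {x : ℝ} (hx : |x| < 1) :
    HasSum (fun n : ℕ ↦ (riemannZeta (2 * (n + 1) : ℕ)).re * x ^ (2 * (n + 1)) / (n + 1))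
      (-log (sinc (π * x))) := by
  refine hasSum_of_hasSum_comm_of_nonneg
    (f := fun j n : ℕ ↦ (x ^ 2 / ((j : ℝ) + 1) ^ 2) ^ (n + 1) / (n + 1))
    (fun j n ↦ by positivity) (fun j ↦ ?_) (fun n ↦ ?_) (hasSum_neg_log_one_sub_sq_div hx)
  · refine hasSum_pow_div_log_of_abs_lt_one ?_
    rw [abs_of_nonneg (by positivity)]
    exact sq_div_nat_add_one_sq_lt_one hx j
  · have h := (hasSum_one_div_nat_add_one_pow (k := 2 * (n + 1)) (by lia)).mul_right
      (x ^ (2 * (n + 1)) / (n + 1))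
    rw [mul_div_assoc]
    refine h.congr_fun fun j ↦ ?_
    rw [div_pow, ← pow_mul, ← pow_mul]
    ring

theorem continuousOn_log_sinc_pi_mul :
    ContinuousOn (fun t ↦ log (sinc (π * t))) {t | |t| < 1} :=
  (continuous_sinc.comp (continuous_const_mul π)).continuousOn.log fun _ ht ↦
    (sinc_pos_of_abs_lt_pi (abs_pi_mul_lt_pi ht)).ne'

-- The terms are nonnegative with integrable sum, so the series dominates itself.
theorem hasSum_integral_riemannZeta_even {x : ℝ} (hx : |x| < 1) :
    HasSum
      (fun n : ℕ ↦
        ∫ t in (0 : ℝ)..x, (riemannZeta (2 * (n + 1) : ℕ)).re * t ^ (2 * (n + 1)) / (n + 1))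
      (∫ t in (0 : ℝ)..x, -log (sinc (π * t))) := by
  let F (n : ℕ) (t : ℝ) : ℝ := (riemannZeta (2 * (n + 1) : ℕ)).re * t ^ (2 * (n + 1)) / (n + 1)
  have hF_nonneg (n : ℕ) (t : ℝ) : 0 ≤ F n t := by
    have := riemannZeta_natCast_re_nonneg (k := 2 * (n + 1)) (by lia)
    have := (even_two_mul (n + 1)).pow_nonneg t
    positivity
  have hmem : ∀ t ∈ uIcc 0 x, |t| < 1 := fun t ht ↦
    (abs_le_abs_of_mem_uIcc_zero ht).trans_lt hx
  have hF_sum : ∀ t ∈ uIcc 0 x, HasSum (F · t) (-log (sinc (π * t))) := fun t ht ↦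
    hasSum_riemannZeta_even_mul_pow_div (hmem t ht)
  refine intervalIntegral.hasSum_integral_of_dominated_convergence F
    (fun n ↦ Continuous.aestronglyMeasurable (by fun_prop))
    (fun n ↦ ae_of_all _ fun t _ ↦ (norm_of_nonneg (hF_nonneg n t)).le)
    (ae_of_all _ fun t ht ↦ (hF_sum t (uIoc_subset_uIcc ht)).summable) ?_
    (ae_of_all _ fun t ht ↦ hF_sum t (uIoc_subset_uIcc ht))
  exact ((continuousOn_log_sinc_pi_mul.mono hmem).neg.congr
    fun t ht ↦ (hF_sum t ht).tsum_eq).intervalIntegrable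

theorem hasSum_riemannZeta_even_mul_pow_div_mul {x : ℝ} (hx : |x| < 1) :
    HasSum
      (fun n : ℕ ↦
        (riemannZeta (2 * (n + 1) : ℕ)).re * x ^ (2 * n + 3) / ((n + 1) * (2 * n + 3)))
      (x * log (π * x) - x - (∫ u in (0 : ℝ)..(π * x), log (sin u)) / π) := by
  have hterm (n : ℕ) :
      ∫ t in (0 : ℝ)..x, (riemannZeta (2 * (n + 1) : ℕ)).re * t ^ (2 * (n + 1)) / (n + 1) =
        (riemannZeta (2 * (n + 1) : ℕ)).re * x ^ (2 * n + 3) / ((n + 1) * (2 * n + 3)) := by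
    rw [intervalIntegral.integral_div, intervalIntegral.integral_const_mul, integral_pow]
    push_cast
    field_simp
    ring
  have hint : ∫ t in (0 : ℝ)..x, -log (sinc (π * t)) =
      x * log (π * x) - x - (∫ u in (0 : ℝ)..(π * x), log (sin u)) / π := by
    rw [intervalIntegral.integral_neg,
      intervalIntegral.integral_comp_mul_left (fun u ↦ log (sinc u)) pi_ne_zero, mul_zero,
      integral_log_sinc (abs_pi_mul_lt_pi hx), smul_eq_mul]
    field_simp
    ring
  simpa only [hterm, hint] using hasSum_integral_riemannZeta_even hx

end Zeta

theorem hasSum_riemannZeta_even_div_sixteen_pow :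
    HasSum
      (fun n : ℕ ↦
        (riemannZeta (2 * (n + 1) : ℕ)).re / ((n + 1) * (2 * n + 3) * 16 ^ (n + 1)))
      (2 * catalanConst / π - 1 + log (π / 2)) := by
  have hpow (n : ℕ) : (4 : ℝ) * (1 / 4) ^ (2 * n + 3) = 1 / 16 ^ (n + 1) := by
    rw [show 2 * n + 3 = 2 * (n + 1) + 1 by ring, pow_succ, pow_mul,
      show (1 / 4 : ℝ) ^ 2 = 1 / 16 by norm_num, one_div_pow]
    ring
  have hlog : log (π / 4) = log (π / 2) - log 2 := by
    rw [← log_div (by positivity) two_ne_zero]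
    ring_nf
  have h := (hasSum_riemannZeta_even_mul_pow_div_mul (x := 1 / 4) (by norm_num)).mul_left 4
  rw [mul_one_div, integral_log_sin_zero_pi_div_four, hlog] at h
  convert! h using 1
  · funext n
    rw [← mul_div_assoc, mul_left_comm, hpow]
    field_simp
  · field_simp
    ring

theorem stmt8 :
    ∑' n : ℕ, riemannZeta (2 * (n + 1)) / ((n + 1) * (2 * n + 3) * 16 ^ (n + 1)) =
      ((2 * catalanConst / π - 1 + Real.log (π / 2) : ℝ) : ℂ) := by
  rw [← hasSum_riemannZeta_even_div_sixteen_pow.tsum_eq, Complex.ofReal_tsum]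
  refine tsum_congr fun n ↦ ?_
  rw [Complex.ofReal_div, ofReal_re_riemannZeta_natCast (by lia)]
  push_cast
  rfl
end
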